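/- Let S be a measurable space, let P and Q be probability kernels from S to ℝ^d with finite first moments such that P_θ ≤cx Q_θ for every θ ∈ S, and let c : ℝ^d × ℝ^d → ℝ ∪ {+∞} be lower semicontinuous and satisfy c(x, y) ≥ −C(1 + ‖x‖ + ‖y‖) for all x, y and some finite constant C. Then there exists a probability kernel γ from S to ℝ^d × ℝ^d such that for every θ ∈ S, γ_θ is a martingale coupling of P_θ and Q_θ and ∫ c dγ_θ ≤ ∫ c dμ for every martingale coupling μ of P_θ and Q_θ (the integrals, taken in (−∞, +∞], are well defined by the lower bound on c and the finite first moments). -/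

import Mathlib

open MeasureTheory ProbabilityTheory Filter

noncomputable section

abbrev Euc (d : ℕ) : Type := EuclideanSpace ℝ (Fin d)

def FiniteFirstMoment {d : ℕ} (μ : Measure (Euc d)) : Prop :=
  Integrable (fun x => x) μ

def ConvexOrder {d : ℕ} (μ ν : Measure (Euc d)) : Prop :=
  ∀ φ : Euc d → ℝ, ConvexOn ℝ Set.univ φ → Integrable φ μ → Integrable φ ν →
    ∫ x, φ x ∂μ ≤ ∫ x, φ x ∂ν

def CoordMono {d : ℕ} (φ : Euc d → ℝ) : Prop :=
  ∀ x y : Euc d, (∀ i, x i ≤ y i) → φ x ≤ φ y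

def IncConvexOrder {d : ℕ} (μ ν : Measure (Euc d)) : Prop :=
  ∀ φ : Euc d → ℝ, ConvexOn ℝ Set.univ φ → CoordMono φ → Integrable φ μ → Integrable φ ν →
    ∫ x, φ x ∂μ ≤ ∫ x, φ x ∂ν

def IsCoupling {d : ℕ} (lam : Measure (Euc d × Euc d)) (μ ν : Measure (Euc d)) : Prop :=
  lam.map Prod.fst = μ ∧ lam.map Prod.snd = ν

def fstSigma (d : ℕ) : MeasurableSpace (Euc d × Euc d) :=
  MeasurableSpace.comap Prod.fst inferInstance

def IsMartingaleCoupling {d : ℕ} (lam : Measure (Euc d × Euc d)) : Prop :=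
  lam[(fun p : Euc d × Euc d => p.2) | fstSigma d] =ᵐ[lam] (fun p => p.1)

def IsSubmartingaleCoupling {d : ℕ} (lam : Measure (Euc d × Euc d)) : Prop :=
  ∀ᵐ p ∂lam, ∀ i, p.1 i ≤ (lam[(fun q : Euc d × Euc d => q.2) | fstSigma d]) p i

/-- Auxiliary conversion of an extended real to `ℝ≥0∞` (negative values go to 0). -/
def erealToENNReal (x : EReal) : ENNReal :=
  if x = ⊤ then ⊤ else ENNReal.ofReal x.toReal

/-- The transport cost ∫ c dμ, with values in `EReal`.  Under the standing lower
bound `c(x,y) ≥ −C(1 + ‖x‖ + ‖y‖)` and finite first moments of the marginals, the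
shifted integrand is nonnegative and this quantity is exactly the well-defined
integral of `c` with values in `(−∞, +∞]`. -/
def ECost {d : ℕ} (c : Euc d × Euc d → EReal) (C : ℝ)
    (μ : Measure (Euc d × Euc d)) : EReal :=
  ((∫⁻ p, erealToENNReal (c p + ((C * (1 + ‖p.1‖ + ‖p.2‖) : ℝ) : EReal)) ∂μ : ENNReal) : EReal)
    - ((∫ p, C * (1 + ‖p.1‖ + ‖p.2‖) ∂μ : ℝ) : EReal)

open scoped Topology CompactlySupported

/-- A countable system of moment constraints. -/
structure MSys (Z ι : Type) [TopologicalSpace Z] where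
  w : Z → ℝ
  w_cont : Continuous w
  one_le_w : ∀ z, 1 ≤ w z
  h : ι → Z → ℝ
  h_cont : ∀ k, Continuous (h k)
  cst : ι → ℝ
  h_le : ∀ k z, |h k z| ≤ cst k * w z
  iw : ι
  h_iw : h iw = w
  T : ℕ → ι
  K : ℕ → Set Z
  K_cpt : ∀ n, IsCompact (K n)
  K_ex : ∀ z, ∀ᶠ n in atTop, z ∈ K n
  T_nonneg : ∀ n z, 0 ≤ h (T n) z
  T_ge : ∀ n z, z ∉ K n → w z ≤ h (T n) z

namespace MSys

variable {Z ι : Type} [TopologicalSpace Z]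

def Feas (M : MSys Z ι) (a : ι → ℝ) : Prop :=
  ∀ (s : Finset ι) (l : ι → ℝ), (∀ k, 0 ≤ l k) → (∀ z, 0 ≤ ∑ k ∈ s, l k * M.h k z) →
    0 ≤ ∑ k ∈ s, l k * a k

/-- The measure satisfies all constraints. -/
def Sat [MeasurableSpace Z] (M : MSys Z ι) (a : ι → ℝ) (γ : Measure Z) : Prop :=
  IsFiniteMeasure γ ∧ Integrable M.w γ ∧ ∀ k, ∫ z, M.h k z ∂γ ≤ a k

lemma w_nonneg (M : MSys Z ι) (z : Z) : 0 ≤ M.w z := zero_le_one.trans (M.one_le_w z)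

/-- The space of continuous functions of controlled growth. -/
def V (M : MSys Z ι) : Submodule ℝ (Z → ℝ) where
  carrier := {f | Continuous f ∧ ∃ c : ℝ, ∀ z, |f z| ≤ c * M.w z}
  add_mem' := by
    rintro f g ⟨hf, c, hc⟩ ⟨hg, e, he⟩
    refine ⟨hf.add hg, c + e, fun z => ?_⟩
    have := abs_add_le (f z) (g z)
    simp only [Pi.add_apply]
    linarith [hc z, he z, add_mul c e (M.w z)]
  zero_mem' := ⟨continuous_const, 0, by simp⟩
  smul_mem' := by
    rintro r f ⟨hf, c, hc⟩
    refine ⟨hf.const_smul r, |r| * c, fun z => ?_⟩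
    simp only [Pi.smul_apply, smul_eq_mul, abs_mul, mul_assoc]
    exact mul_le_mul_of_nonneg_left (hc z) (abs_nonneg r)

lemma h_mem (M : MSys Z ι) (k : ι) : M.h k ∈ M.V := ⟨M.h_cont k, M.cst k, M.h_le k⟩
lemma w_mem (M : MSys Z ι) : M.w ∈ M.V := by
  have := M.h_mem M.iw; rwa [M.h_iw] at this

lemma mem_of_le (M : MSys Z ι) {f : Z → ℝ} (hf : Continuous f) {c : ℝ}
    (h : ∀ z, |f z| ≤ c * M.w z) : f ∈ M.V := ⟨hf, c, h⟩

lemma exists_functional (M : MSys Z ι) (a : ι → ℝ) (hF : M.Feas a) :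
    ∃ L : M.V →ₗ[ℝ] ℝ, (∀ f : M.V, (∀ z, 0 ≤ f.1 z) → 0 ≤ L f) ∧
      ∀ k, L ⟨M.h k, M.h_mem k⟩ ≤ a k := by
  classical
  let C : PointedCone ℝ (M.V × ℝ) :=
    { carrier := {q | ∃ (s : Finset ι) (l : ι → ℝ), (∀ k, 0 ≤ l k) ∧ (∀ k, k ∉ s → l k = 0) ∧
        (∀ z, 0 ≤ q.1.1 z + ∑ k ∈ s, l k * M.h k z) ∧ q.2 = ∑ k ∈ s, l k * a k}
      add_mem' := by
        rintro ⟨f, r⟩ ⟨g, t⟩ ⟨s, l, hl, hs, h1, h2⟩ ⟨s', l', hl', hs', h1', h2'⟩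
        have key : ∀ b : ι → ℝ, ∑ k ∈ s ∪ s', (l k + l' k) * b k
            = ∑ k ∈ s, l k * b k + ∑ k ∈ s', l' k * b k := by
          intro b
          simp only [add_mul, Finset.sum_add_distrib]
          congr 1
          · symm; apply Finset.sum_subset Finset.subset_union_left
            intro k _ hk; simp [hs k hk]
          · symm; apply Finset.sum_subset Finset.subset_union_right
            intro k _ hk; simp [hs' k hk]
        refine ⟨s ∪ s', fun k => l k + l' k, fun k => add_nonneg (hl k) (hl' k), ?_, ?_, ?_⟩
        · intro k hk
          simp only [Finset.mem_union, not_or] at hk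
          simp [hs k hk.1, hs' k hk.2]
        · intro z
          rw [key (fun k => M.h k z)]
          have := h1 z; have := h1' z
          simp only [Prod.mk_add_mk, Submodule.coe_add, Pi.add_apply] at *
          linarith
        · rw [key a]
          simp only [Prod.mk_add_mk] at *
          linarith
      zero_mem' := ⟨∅, 0, by simp, by simp, by simp, by simp⟩
      smul_mem' := by
        rintro ⟨c, hc⟩ ⟨f, r⟩ ⟨s, l, hl, hs, h1, h2⟩
        refine ⟨s, fun k => c * l k, fun k => mul_nonneg hc (hl k), fun k hk => by simp [hs k hk],
          fun z => ?_, ?_⟩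
        · have := mul_nonneg hc (h1 z)
          simp only [mul_assoc, ← Finset.mul_sum]
          rw [mul_add] at this
          exact this
        · simp only [mul_assoc, ← Finset.mul_sum]
          simp only at h2
          rw [← h2]; rfl }
  let D : Submodule ℝ (M.V × ℝ) := LinearMap.range (LinearMap.inr ℝ M.V ℝ)
  let F : (M.V × ℝ) →ₗ.[ℝ] ℝ := ⟨D, (LinearMap.snd ℝ M.V ℝ).comp D.subtype⟩
  have hN : ∀ x : F.domain, (x : M.V × ℝ) ∈ C → 0 ≤ F x := by
    rintro ⟨x, ⟨r, rfl⟩⟩ ⟨s, l, hl, hs, h1, h2⟩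
    change 0 ≤ r
    have h2' : r = ∑ k ∈ s, l k * a k := h2
    rw [h2']
    apply hF s l hl
    intro z
    simpa using h1 z
  have hD : ∀ y, ∃ x : F.domain, (x : M.V × ℝ) + y ∈ C := by
    rintro ⟨⟨f, hf, c, hc⟩, r⟩
    have hc0 : ∀ z, -( |c| * M.w z) ≤ f z := fun z => by
      have := neg_abs_le (f z)
      have := mul_le_mul_of_nonneg_right (le_abs_self c) (M.w_nonneg z)
      linarith [hc z]
    refine ⟨⟨(0, |c| * a M.iw - r), ⟨_, rfl⟩⟩, {M.iw}, fun j => if j = M.iw then |c| else 0,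
      fun j => by dsimp only; split_ifs <;> simp, fun j hj => if_neg (by simpa using hj),
      fun z => ?_, ?_⟩
    · simp [M.h_iw]; linarith [hc0 z]
    · simp
  obtain ⟨g, hg1, hg2⟩ := riesz_extension C F hN hD
  · refine ⟨g.comp (LinearMap.inl ℝ M.V ℝ), ?_, ?_⟩
    · intro f hf
      apply hg2
      exact ⟨∅, 0, by simp, by simp, by simpa using hf, by simp⟩
    · intro k
      have h1 : g (0, a k) = a k := hg1 ⟨(0, a k), ⟨a k, rfl⟩⟩
      have h2 : 0 ≤ g (-⟨M.h k, M.h_mem k⟩, a k) := by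
        apply hg2
        exact ⟨{k}, fun j => if j = k then 1 else 0, fun j => by dsimp only; split_ifs <;> simp,
          fun j hj => by simpa using hj, fun z => by simp, by simp⟩
      have h3 : ((-⟨M.h k, M.h_mem k⟩, a k) : M.V × ℝ)
          = (0, a k) - LinearMap.inl ℝ M.V ℝ ⟨M.h k, M.h_mem k⟩ := by
        ext <;> simp
      rw [h3, map_sub, h1] at h2
      simp only [LinearMap.comp_apply]
      linarith

variable [T2Space Z] [LocallyCompactSpace Z] [MeasurableSpace Z] [BorelSpace Z]

lemma cutoff (M : MSys Z ι) (n : ℕ) : ∃ χ : Z → ℝ, Continuous χ ∧ HasCompactSupport χ ∧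
    (∀ z, 0 ≤ χ z) ∧ (∀ z, χ z ≤ 1) ∧ ∀ z ∈ M.K n, χ z = 1 := by
  obtain ⟨f, hf1, hf2, hf3, hf4⟩ :=
    exists_continuousMap_one_of_isCompact_subset_isOpen (M.K_cpt n) isOpen_univ (Set.subset_univ _)
  refine ⟨f, f.continuous, hf2, fun z => ?_, fun z => ?_, fun z hz => hf1 hz⟩
  · exact (hf4 z).1
  · exact (hf4 z).2

theorem exists_sat (M : MSys Z ι) (a : ι → ℝ) (hF : M.Feas a)
    (hT : Tendsto (fun n => a (M.T n)) atTop (𝓝 0)) : ∃ γ : Measure Z, M.Sat a γ := by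
  obtain ⟨L, hL0, hLa⟩ := M.exists_functional a hF
  have hLmono : ∀ f g : M.V, (∀ z, f.1 z ≤ g.1 z) → L f ≤ L g := by
    intro f g hfg
    have := hL0 (g - f) (fun z => by simpa using hfg z)
    rw [map_sub] at this; linarith
  have ccV : ∀ f : C_c(Z, ℝ), (f : Z → ℝ) ∈ M.V := by
    intro f
    obtain ⟨c, hc⟩ := f.hasCompactSupport.exists_bound_of_continuous f.continuous
    refine ⟨f.continuous, |c|, fun z => ?_⟩
    have h1 := hc z
    rw [Real.norm_eq_abs] at h1
    have h2 := mul_le_mul_of_nonneg_left (M.one_le_w z) (abs_nonneg c)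
    linarith [le_abs_self c]
  let Λ₀ : C_c(Z, ℝ) →ₗ[ℝ] ℝ :=
    { toFun := fun f => L ⟨f, ccV f⟩
      map_add' := fun f g => by rw [← map_add]; rfl
      map_smul' := fun r f => by rw [← map_smul]; rfl }
  let Λ : C_c(Z, ℝ) →ₚ[ℝ] ℝ := PositiveLinearMap.mk₀ Λ₀ (fun f hf => hL0 _ (fun z => hf z))
  let γ := RealRMK.rieszMeasure Λ
  have hγ : ∀ (f : Z → ℝ) (hf : Continuous f) (hs : HasCompactSupport f) (hm : f ∈ M.V),
      Integrable f γ ∧ ∫ z, f z ∂γ = L ⟨f, hm⟩ := by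
    intro f hf hs hm
    let f' : C_c(Z, ℝ) := ⟨⟨f, hf⟩, hs⟩
    refine ⟨?_, RealRMK.integral_rieszMeasure Λ f'⟩
    have : IsFiniteMeasureOnCompacts γ := by
      change IsFiniteMeasureOnCompacts (RealRMK.rieszMeasure Λ)
      infer_instance
    exact hf.integrable_of_hasCompactSupport hs
  choose χ χc χs χ0 χ1 χK using M.cutoff
  have mulV : ∀ f ∈ M.V, ∀ n, (fun z => f z * χ n z) ∈ M.V := by
    rintro f ⟨hf, c, hc⟩ n
    refine ⟨hf.mul (χc n), c, fun z => ?_⟩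
    rw [abs_mul, abs_of_nonneg (χ0 n z)]
    exact (mul_le_of_le_one_right (abs_nonneg _) (χ1 n z)).trans (hc z)
  have hχlim : ∀ z, ∀ᶠ n in atTop, χ n z = 1 := fun z => (M.K_ex z).mono fun n hn => χK n z hn
  have hIntg : ∀ f (hf : f ∈ M.V) n, Integrable (fun z => f z * χ n z) γ ∧
      ∫ z, f z * χ n z ∂γ = L ⟨_, mulV f hf n⟩ := fun f hf n =>
    hγ _ (hf.1.mul (χc n)) ((χs n).mul_left) _
  -- integrability of w
  have hw : Integrable M.w γ := by
    refine ⟨M.w_cont.aestronglyMeasurable, ?_⟩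
    rw [hasFiniteIntegral_iff_ofReal (ae_of_all _ M.w_nonneg)]
    have h1 : ∀ z, ENNReal.ofReal (M.w z)
        = liminf (fun n => ENNReal.ofReal (M.w z * χ n z)) atTop := by
      intro z
      symm
      apply Tendsto.liminf_eq
      apply tendsto_const_nhds.congr'
      filter_upwards [hχlim z] with n hn
      rw [hn, mul_one]
    simp_rw [h1]
    refine (lintegral_liminf_le (fun n =>
      (M.w_cont.mul (χc n)).measurable.ennreal_ofReal)).trans_lt ?_
    refine lt_of_le_of_lt (b := ENNReal.ofReal (L ⟨M.w, M.w_mem⟩)) ?_ ENNReal.ofReal_lt_top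
    refine liminf_le_of_le (by isBoundedDefault) (fun b hb => ?_)
    obtain ⟨n, hn⟩ := hb.exists
    refine hn.trans ?_
    simp only [Pi.mul_apply]
    rw [← ofReal_integral_eq_lintegral_ofReal (hIntg _ M.w_mem n).1
      (ae_of_all _ fun z => mul_nonneg (M.w_nonneg z) (χ0 n z)), (hIntg _ M.w_mem n).2]
    apply ENNReal.ofReal_le_ofReal
    exact hLmono _ _ (fun z => mul_le_of_le_one_right (M.w_nonneg z) (χ1 n z))
  have hfin : IsFiniteMeasure γ := by
    have : Integrable (fun _ : Z => (1 : ℝ)) γ :=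
      hw.mono aestronglyMeasurable_const (ae_of_all _ fun z => by
        simpa using (M.one_le_w z).trans (le_abs_self _))
    rcases integrable_const_iff.1 this with h | h
    · simp at h
    · exact h
  refine ⟨γ, hfin, hw, fun k => ?_⟩
  have lim1 : Tendsto (fun n => ∫ z, M.h k z * χ n z ∂γ) atTop (𝓝 (∫ z, M.h k z ∂γ)) := by
    refine tendsto_integral_of_dominated_convergence (fun z => M.cst k * M.w z)
      (fun n => ((M.h_cont k).mul (χc n)).aestronglyMeasurable) (hw.const_mul _) ?_ ?_
    · intro n
      refine ae_of_all _ fun z => ?_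
      rw [Real.norm_eq_abs, abs_mul, abs_of_nonneg (χ0 n z)]
      exact (mul_le_of_le_one_right (abs_nonneg _) (χ1 n z)).trans (M.h_le k z)
    · refine ae_of_all _ fun z => ?_
      apply tendsto_const_nhds.congr'
      filter_upwards [hχlim z] with n hn
      rw [hn, mul_one]
  have lim2 : Tendsto (fun n => a k + |M.cst k| * a (M.T n)) atTop (𝓝 (a k + |M.cst k| * 0)) :=
    tendsto_const_nhds.add (hT.const_mul _)
  rw [mul_zero, add_zero] at lim2
  refine le_of_tendsto_of_tendsto' lim1 lim2 (fun n => ?_)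
  rw [(hIntg _ (M.h_mem k) n).2]
  have h1 : L ⟨_, mulV _ (M.h_mem k) n⟩ ≤
      L (⟨M.h k, M.h_mem k⟩ + |M.cst k| • ⟨M.h (M.T n), M.h_mem _⟩) := by
    apply hLmono
    intro z
    change M.h k z * χ n z ≤ M.h k z + |M.cst k| * M.h (M.T n) z
    by_cases hz : z ∈ M.K n
    · rw [χK n z hz, mul_one]
      have := mul_nonneg (abs_nonneg (M.cst k)) (M.T_nonneg n z)
      linarith
    · have e1 := M.T_ge n z hz
      have e2 := mul_le_mul_of_nonneg_left e1 (abs_nonneg (M.cst k))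
      have e3 : |M.h k z| ≤ |M.cst k| * M.w z :=
        (M.h_le k z).trans (mul_le_mul_of_nonneg_right (le_abs_self _) (M.w_nonneg z))
      have e4 : -(M.h k z * (1 - χ n z)) ≤ |M.h k z| := by
        refine (neg_le_abs _).trans ?_
        rw [abs_mul, abs_of_nonneg (sub_nonneg.2 (χ1 n z))]
        exact mul_le_of_le_one_right (abs_nonneg _) (by linarith [χ0 n z])
      linarith
  rw [map_add, map_smul, smul_eq_mul] at h1
  have h2 := mul_le_mul_of_nonneg_left (hLa (M.T n)) (abs_nonneg (M.cst k))
  linarith [hLa k]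

lemma Sat.integrable {M : MSys Z ι} {a : ι → ℝ} {γ : Measure Z} (h : M.Sat a γ) (k : ι) :
    Integrable (M.h k) γ :=
  (h.2.1.const_mul (M.cst k)).mono' (M.h_cont k).aestronglyMeasurable
    (ae_of_all _ fun z => M.h_le k z)

lemma Sat.feas {M : MSys Z ι} {a : ι → ℝ} {γ : Measure Z} (h : M.Sat a γ) : M.Feas a := by
  intro s l hl h0
  calc 0 ≤ ∫ z, ∑ k ∈ s, l k * M.h k z ∂γ := integral_nonneg h0
    _ = ∑ k ∈ s, l k * ∫ z, M.h k z ∂γ := by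
      rw [integral_finsetSum _ (fun k _ => (h.integrable k).const_mul _)]
      simp_rw [integral_const_mul]
    _ ≤ _ := Finset.sum_le_sum fun k _ => mul_le_mul_of_nonneg_left (h.2.2 k) (hl k)

end MSys

namespace MSys

variable {Z ι : Type} [TopologicalSpace Z]

def ev (l : ι →₀ ℚ) (b : ι → ℝ) : ℝ := ∑ k ∈ l.support, (l k : ℝ) * b k

lemma feas_iff (M : MSys Z ι) (a : ι → ℝ) : M.Feas a ↔
    ∀ l : ι →₀ ℚ, (∀ k, 0 ≤ l k) → (∀ z, 0 ≤ ev l (fun k => M.h k z)) → 0 ≤ ev l a := by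
  classical
  constructor
  · intro h l hl h0
    exact h l.support (fun k => (l k : ℝ)) (fun k => by exact_mod_cast hl k) h0
  intro h s l hl h0
  obtain ⟨N, hN⟩ := exists_nat_ge (∑ k ∈ s, |M.cst k|)
  have hq : ∀ (n : ℕ) k, ∃ q : ℚ, l k < q ∧ (q : ℝ) < l k + 1 / ((n : ℝ) + 1) := fun n k =>
    exists_rat_btwn (by have : 0 < 1 / ((n : ℝ) + 1) := by positivity
                        linarith)
  choose q hq1 hq2 using hq
  let r : ℕ → ℚ := fun n => N * (1 / ((n : ℚ) + 1))
  let l' : ℕ → ι →₀ ℚ := fun n => ∑ k ∈ s, Finsupp.single k (q n k) + Finsupp.single M.iw (r n)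
  have hev : ∀ n (b : ι → ℝ), ev (l' n) b = ∑ k ∈ s, (q n k : ℝ) * b k + (r n : ℝ) * b M.iw := by
    intro n b
    change (l' n).sum (fun k x => (x : ℝ) * b k) = _
    have e0 : ∀ k : ι, ((0 : ℚ) : ℝ) * b k = 0 := by simp
    have e1 : ∀ (k : ι) (x y : ℚ), ((x + y : ℚ) : ℝ) * b k = x * b k + y * b k := by
      intro k x y; push_cast; ring
    rw [Finsupp.sum_add_index' e0 e1, Finsupp.sum_single_index (e0 _),
      ← Finsupp.sum_finsetSum_index e0 e1]
    congr 1
    exact Finset.sum_congr rfl fun k _ => Finsupp.sum_single_index (e0 _)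
  have hr : ∀ n, (r n : ℝ) = N * (1 / ((n : ℝ) + 1)) := by intro n; simp [r]
  have hq0 : ∀ n k, 0 ≤ q n k := fun n k => by
    have := (hl k).trans (hq1 n k).le
    exact_mod_cast this
  have hnn : ∀ n, 0 ≤ ev (l' n) a := by
    intro n
    apply h
    · intro k
      have h1 : ∀ j ∈ s, 0 ≤ (Finsupp.single j (q n j)) k := by
        intro j _
        rw [Finsupp.single_apply]; split_ifs
        · exact hq0 n j
        · exact le_rfl
      have h2 : 0 ≤ (Finsupp.single M.iw (r n)) k := by
        rw [Finsupp.single_apply]; split_ifs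
        · simp only [r]; positivity
        · exact le_rfl
      simp only [l', Finsupp.add_apply, Finsupp.finsetSum_apply]
      exact add_nonneg (Finset.sum_nonneg h1) h2
    · intro z
      rw [hev, M.h_iw, hr]
      have e : (0 : ℝ) < 1 / ((n : ℝ) + 1) := by positivity
      have h3 : ∑ k ∈ s, l k * M.h k z - ∑ k ∈ s, (q n k : ℝ) * M.h k z
          ≤ ∑ k ∈ s, (1 / ((n : ℝ) + 1)) * (|M.cst k| * M.w z) := by
        rw [← Finset.sum_sub_distrib]
        refine Finset.sum_le_sum fun k _ => ?_
        rw [← sub_mul]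
        have h4 : |l k - q n k| ≤ 1 / ((n : ℝ) + 1) := by
          rw [abs_le]; constructor <;> linarith [hq1 n k, hq2 n k]
        calc (l k - q n k) * M.h k z ≤ |l k - q n k| * |M.h k z| := by
              rw [← abs_mul]; exact le_abs_self _
          _ ≤ _ := by
            apply mul_le_mul h4 _ (abs_nonneg _) e.le
            exact (M.h_le k z).trans
              (mul_le_mul_of_nonneg_right (le_abs_self _) (M.w_nonneg z))
      rw [← Finset.mul_sum, ← Finset.sum_mul] at h3
      have h5 := mul_le_mul_of_nonneg_left
        (mul_le_mul_of_nonneg_right hN (M.w_nonneg z)) e.le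
      have := h0 z
      nlinarith
  have lim : Tendsto (fun n => ev (l' n) a) atTop (𝓝 (∑ k ∈ s, l k * a k)) := by
    have e := tendsto_one_div_add_atTop_nhds_zero_nat (𝕜 := ℝ)
    have h1 : ∀ k, Tendsto (fun n => (q n k : ℝ)) atTop (𝓝 (l k)) := by
      intro k
      have h2 : Tendsto (fun n : ℕ => l k + 1 / ((n : ℝ) + 1)) atTop (𝓝 (l k + 0)) :=
        tendsto_const_nhds.add e
      rw [add_zero] at h2
      exact tendsto_of_tendsto_of_tendsto_of_le_of_le tendsto_const_nhds h2
        (fun n => (hq1 n k).le) (fun n => (hq2 n k).le)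
    have h3 : Tendsto (fun n => ∑ k ∈ s, (q n k : ℝ) * a k + (r n : ℝ) * a M.iw) atTop
        (𝓝 (∑ k ∈ s, l k * a k + (N * 0) * a M.iw)) := by
      apply Tendsto.add
      · exact tendsto_finsetSum _ fun k _ => (h1 k).mul_const _
      · simp_rw [hr]
        exact (e.const_mul _).mul_const _
    simp_rw [hev]
    simpa using h3
  exact ge_of_tendsto' lim hnn

variable {S : Type} [MeasurableSpace S]

lemma measurableSet_feas [Countable ι] (M : MSys Z ι) (a : S → ι → ℝ)
    (ha : ∀ k, Measurable fun θ => a θ k) : MeasurableSet {θ | M.Feas (a θ)} := by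
  have : {θ | M.Feas (a θ)} = ⋂ l : ι →₀ ℚ, {θ | (∀ k, 0 ≤ l k) →
      (∀ z, 0 ≤ ev l (fun k => M.h k z)) → 0 ≤ ev l (a θ)} := by
    ext θ; simp only [Set.mem_ofPred_eq, Set.mem_iInter]; exact M.feas_iff (a θ)
  rw [this]
  refine MeasurableSet.iInter fun l => ?_
  by_cases h1 : ∀ k, 0 ≤ l k
  · by_cases h2 : ∀ z, 0 ≤ ev l (fun k => M.h k z)
    · have : {θ | (∀ k, 0 ≤ l k) → (∀ z, 0 ≤ ev l (fun k => M.h k z)) → 0 ≤ ev l (a θ)}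
          = {θ | 0 ≤ ev l (a θ)} := by ext θ; exact ⟨fun h => h h1 h2, fun h _ _ => h⟩
      rw [this]
      apply measurableSet_le measurable_const
      exact Finset.measurable_sum _ fun k _ => (ha k).const_mul _
    · convert MeasurableSet.univ
      simp [h2]
  · convert MeasurableSet.univ
    simp only [Set.eq_univ_iff_forall]
    intro θ h; exact absurd h h1

lemma Feas.mono {M : MSys Z ι} {a b : ι → ℝ} (h : M.Feas a) (hab : ∀ k, a k ≤ b k) : M.Feas b :=
  fun s l hl h0 => (h s l hl h0).trans
    (Finset.sum_le_sum fun k _ => mul_le_mul_of_nonneg_left (hab k) (hl k))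

lemma step [Countable ι] (M : MSys Z ι) (A : S → ℝ → ι → ℝ)
    (hm : ∀ t k, Measurable fun θ => A θ t k) (hcont : ∀ θ k, Continuous fun t => A θ t k)
    (hmono : ∀ θ k, Monotone fun t => A θ t k) (hne : ∀ θ, ∃ t, M.Feas (A θ t))
    (hbb : ∀ θ, BddBelow {t | M.Feas (A θ t)}) :
    ∃ v : S → ℝ, Measurable v ∧ ∀ θ t, M.Feas (A θ t) ↔ v θ ≤ t := by
  have hiff : ∀ θ t, M.Feas (A θ t) ↔ sInf {t | M.Feas (A θ t)} ≤ t := by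
    intro θ t
    constructor
    · intro h; exact csInf_le (hbb θ) h
    · intro h
      have hcl : IsClosed {t | M.Feas (A θ t)} := by
        simp only [Feas, Set.ofPred_forall]
        refine isClosed_iInter fun s => isClosed_iInter fun l => isClosed_iInter fun _ =>
          isClosed_iInter fun _ => ?_
        exact isClosed_le continuous_const
          (continuous_finsetSum _ fun k _ => continuous_const.mul (hcont θ k))
      have := hcl.csInf_mem (hne θ) (hbb θ)
      exact Feas.mono this fun k => hmono θ k h
  refine ⟨fun θ => sInf {t | M.Feas (A θ t)}, ?_, hiff⟩
  apply measurable_of_Iic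
  intro r
  have : (fun θ => sInf {t | M.Feas (A θ t)}) ⁻¹' Set.Iic r = {θ | M.Feas (A θ r)} := by
    ext θ; exact (hiff θ r).symm
  rw [this]
  exact M.measurableSet_feas _ (hm r)

/-- Adjoin countably many further constraint functions. -/
def ext (M : MSys Z ι) (g : ℕ → Z → ℝ) (hg : ∀ n, Continuous (g n)) (cg : ℕ → ℝ)
    (hcg : ∀ n z, |g n z| ≤ cg n * M.w z) : MSys Z (ι ⊕ ℕ) where
  w := M.w
  w_cont := M.w_cont
  one_le_w := M.one_le_w
  h := Sum.elim M.h g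
  h_cont := by rintro (k | n); exacts [M.h_cont k, hg n]
  cst := Sum.elim M.cst cg
  h_le := by rintro (k | n) z; exacts [M.h_le k z, hcg n z]
  iw := Sum.inl M.iw
  h_iw := M.h_iw
  T := fun n => Sum.inl (M.T n)
  K := M.K
  K_cpt := M.K_cpt
  K_ex := M.K_ex
  T_nonneg := fun n z => M.T_nonneg n z
  T_ge := fun n z hz => M.T_ge n z hz

lemma ext_sat [MeasurableSpace Z] (M : MSys Z ι) (g : ℕ → Z → ℝ) (hg : ∀ n, Continuous (g n))
    (cg : ℕ → ℝ) (hcg : ∀ n z, |g n z| ≤ cg n * M.w z) (a : ι → ℝ) (b : ℕ → ℝ) (γ : Measure Z) :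
    (M.ext g hg cg hcg).Sat (Sum.elim a b) γ ↔ M.Sat a γ ∧ ∀ n, ∫ z, g n z ∂γ ≤ b n := by
  constructor
  · rintro ⟨h1, h2, h3⟩
    exact ⟨⟨h1, h2, fun k => h3 (Sum.inl k)⟩, fun n => h3 (Sum.inr n)⟩
  · rintro ⟨⟨h1, h2, h3⟩, h4⟩
    refine ⟨h1, h2, ?_⟩
    rintro (k | n)
    exacts [h3 k, h4 n]

variable [T2Space Z] [LocallyCompactSpace Z] [MeasurableSpace Z] [BorelSpace Z]

/-- Lexicographic minimisation: the integrals of all `g n` can be pinned down measurably. -/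
theorem exists_pinned [Countable ι] (M : MSys Z ι) (a : S → ι → ℝ)
    (ha : ∀ k, Measurable fun θ => a θ k) (hF : ∀ θ, M.Feas (a θ))
    (hT : ∀ θ, Tendsto (fun n => a θ (M.T n)) atTop (𝓝 0))
    (g : ℕ → Z → ℝ) (hg : ∀ n, Continuous (g n)) (hg1 : ∀ n z, |g n z| ≤ 1) :
    ∃ β : S → ℕ → ℝ, (∀ n, Measurable fun θ => β θ n) ∧
      ∀ θ, ∃ γ : Measure Z, M.Sat (a θ) γ ∧ ∀ n, ∫ z, g n z ∂γ = β θ n := by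
  classical
  have hcg : ∀ n z, |g n z| ≤ (1 : ℝ) * M.w z := fun n z => by
    rw [one_mul]; exact (hg1 n z).trans (M.one_le_w z)
  let M' := M.ext g hg (fun _ => 1) hcg
  let Inv : (S → ℕ → ℝ) → Prop := fun b => (∀ n, Measurable fun θ => b θ n) ∧
    ∀ θ, M'.Feas (Sum.elim (a θ) (b θ))
  have hstep : ∀ (n : ℕ) (b : S → ℕ → ℝ), Inv b → ∃ v : S → ℝ, Measurable v ∧
      ∀ θ t, M'.Feas (Sum.elim (a θ) (Function.update (b θ) n t)) ↔ v θ ≤ t := by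
    rintro n b ⟨hb1, hb2⟩
    refine M'.step (fun θ t => Sum.elim (a θ) (Function.update (b θ) n t)) ?_ ?_ ?_ ?_ ?_
    · rintro t (k | m)
      · exact ha k
      · by_cases hm : m = n
        · subst hm; simp
        · simpa [hm] using hb1 m
    · rintro θ (k | m)
      · exact continuous_const
      · by_cases hm : m = n
        · subst hm; simpa using continuous_id'
        · simpa [hm] using continuous_const
    · rintro θ (k | m)
      · exact monotone_const
      · by_cases hm : m = n
        · subst hm; intro t t' h; simpa using h
        · simpa [hm] using monotone_const
    · intro θ
      refine ⟨b θ n, ?_⟩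
      rw [Function.update_eq_self]; exact hb2 θ
    · intro θ
      refine ⟨-(a θ M.iw), fun t ht => ?_⟩
      have := ht {Sum.inl M.iw, Sum.inr n} (fun _ => 1) (by simp) (fun z => by
        rw [Finset.sum_pair (by simp)]
        have e1 : M'.h (Sum.inl M.iw) z = M.w z := congrFun M.h_iw z
        have e2 : M'.h (Sum.inr n) z = g n z := rfl
        rw [e1, e2]
        linarith [neg_abs_le (g n z), hcg n z])
      rw [Finset.sum_pair (by simp)] at this
      simp at this
      linarith
  choose v hv1 hv2 using hstep
  have hnext : ∀ n b (hb : Inv b), Inv (fun θ => Function.update (b θ) n (v n b hb θ)) := by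
    intro n b hb
    refine ⟨fun m => ?_, fun θ => (hv2 n b hb θ _).2 le_rfl⟩
    by_cases hm : m = n
    · subst hm; simpa using hv1 m b hb
    · simpa [hm] using hb.1 m
  have hinit : Inv (fun θ _ => a θ M.iw) := by
    refine ⟨fun _ => ha _, fun θ => ?_⟩
    obtain ⟨γ, hγ⟩ := M.exists_sat (a θ) (hF θ) (hT θ)
    refine Sat.feas (γ := γ) ((M.ext_sat g hg _ hcg _ _ γ).2 ⟨hγ, fun n => ?_⟩)
    have h1 := hγ.2.2 M.iw
    rw [M.h_iw] at h1
    refine le_trans (integral_mono ?_ hγ.2.1 fun z => ?_) h1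
    · exact hγ.2.1.mono' (hg n).aestronglyMeasurable
        (ae_of_all _ fun z => by simpa using hcg n z)
    · linarith [le_abs_self (g n z), hcg n z]
  let seq : ℕ → {b // Inv b} := fun n => Nat.rec ⟨_, hinit⟩ (fun n b => ⟨_, hnext n b.1 b.2⟩) n
  let β : S → ℕ → ℝ := fun θ n => v n (seq n).1 (seq n).2 θ
  have hseq : ∀ n θ, (seq (n + 1)).1 θ = Function.update ((seq n).1 θ) n (β θ n) :=
    fun n θ => rfl
  have hlow : ∀ n θ m, m < n → (seq n).1 θ m = β θ m := by
    intro n θ m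
    induction n with
    | zero => intro h; omega
    | succ n ih =>
      intro h
      rw [hseq]
      by_cases hm : m = n
      · subst hm; simp
      · simp [hm]; exact ih (by omega)
  have hhigh : ∀ n θ m, n ≤ m → (seq n).1 θ m = a θ M.iw := by
    intro n θ m
    induction n with
    | zero => intro h; rfl
    | succ n ih =>
      intro h
      rw [hseq, Function.update_of_ne (by omega)]
      exact ih (by omega)
  refine ⟨β, fun n => hv1 n _ _, fun θ => ?_⟩
  have hFβ : M'.Feas (Sum.elim (a θ) (β θ)) := by
    intro s l hl h0
    obtain ⟨N, hN⟩ : ∃ N, ∀ m, Sum.inr m ∈ s → m < N := by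
      refine ⟨s.sup (Sum.elim (fun _ => 0) (fun m => m + 1)), fun m hm => ?_⟩
      have := Finset.le_sup (f := Sum.elim (fun _ : ι => 0) (fun m => m + 1)) hm
      simpa using this
    have := (seq N).2.2 θ s l hl h0
    convert this using 1
    refine Finset.sum_congr rfl ?_
    rintro (k | m) hk
    · rfl
    · simp only [Sum.elim_inr]; rw [hlow N θ m (hN m hk)]
  obtain ⟨γ, hγ⟩ := M'.exists_sat _ hFβ (hT θ)
  rw [M.ext_sat] at hγ
  refine ⟨γ, hγ.1, fun n => le_antisymm (hγ.2 n) ?_⟩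
  refine (hv2 n (seq n).1 (seq n).2 θ _).1 (Sat.feas (γ := γ) ?_)
  rw [M.ext_sat]
  refine ⟨hγ.1, fun m => ?_⟩
  by_cases hm : m = n
  · subst hm; simp
  · rw [Function.update_of_ne hm]
    rcases lt_or_ge m n with h | h
    · rw [hlow n θ m h]; exact hγ.2 m
    · rw [hhigh n θ m h]
      have h1 := hγ.1.2.2 M.iw
      rw [M.h_iw] at h1
      refine le_trans (integral_mono ?_ hγ.1.2.1 fun z => ?_) h1
      · exact hγ.1.2.1.mono' (hg m).aestronglyMeasurable
          (ae_of_all _ fun z => by simpa using hcg m z)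
      · linarith [le_abs_self (g m z), hcg m z]

end MSys

section Bump

open TopologicalSpace

variable (X : Type) [PseudoEMetricSpace X] [SecondCountableTopology X]

/-- index type of the bump functions -/
abbrev BI : Type := Finset (countableBasis X) × ℕ

instance : Countable (countableBasis X) := (countable_countableBasis X).to_subtype

variable {X}

def cset (s : Finset (countableBasis X)) : Set X := ⋂ i ∈ s, (i.1)ᶜ

lemma isClosed_cset (s : Finset (countableBasis X)) : IsClosed (cset s) :=
  isClosed_biInter fun i _ => (isOpen_of_mem_countableBasis i.2).isClosed_compl

def bump (κ : BI X) (x : X) : ℝ :=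
  (thickenedIndicator (Nat.one_div_pos_of_nat (α := ℝ) (n := κ.2)) (cset κ.1) x : ℝ)

lemma bump_cont (κ : BI X) : Continuous (bump κ) :=
  NNReal.continuous_coe.comp (thickenedIndicator _ (cset κ.1)).continuous

lemma bump_nonneg (κ : BI X) (x : X) : 0 ≤ bump κ x := NNReal.coe_nonneg _

lemma bump_le_one (κ : BI X) (x : X) : bump κ x ≤ 1 := by
  have := thickenedIndicator_le_one (Nat.one_div_pos_of_nat (α := ℝ) (n := κ.2)) (cset κ.1) x
  exact NNReal.coe_le_coe.2 this

lemma abs_bump_le (κ : BI X) (x : X) : |bump κ x| ≤ 1 := by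
  rw [abs_of_nonneg (bump_nonneg κ x)]; exact bump_le_one κ x

lemma bump_empty (n : ℕ) (x : X) : bump ((∅, n) : BI X) x = 1 := by
  have := thickenedIndicator_one (Nat.one_div_pos_of_nat (α := ℝ) (n := n))
    (cset (∅ : Finset (countableBasis X))) (x := x) (by simp [cset])
  simp only [bump, this]; rfl

lemma bump_tendsto (s : Finset (countableBasis X)) (x : X) :
    Tendsto (fun n => bump (s, n) x) atTop (𝓝 ((cset s).indicator (fun _ => (1 : ℝ)) x)) := by
  have h := thickenedIndicator_tendsto_indicator_closure (α := X)
    (δseq := fun n : ℕ => 1 / ((n : ℝ) + 1)) (fun n => Nat.one_div_pos_of_nat)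
    tendsto_one_div_add_atTop_nhds_zero_nat (cset s)
  rw [tendsto_pi_nhds] at h
  have h2 := (NNReal.continuous_coe.tendsto _).comp (h x)
  rw [(isClosed_cset s).closure_eq] at h2
  have h3 : (cset s).indicator (fun _ => (1 : ℝ)) x
      = (((cset s).indicator (fun _ => (1 : NNReal)) x : NNReal) : ℝ) := by
    by_cases hx : x ∈ cset s <;> simp [hx]
  rw [h3]
  exact h2

lemma isPiSystem_cset : IsPiSystem (Set.range (cset (X := X))) := by
  classical
  rintro _ ⟨s, rfl⟩ _ ⟨t, rfl⟩ _
  refine ⟨s ∪ t, ?_⟩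
  simp only [cset]
  ext x
  simp only [Set.mem_iInter, Finset.mem_union, Set.mem_inter_iff, or_imp, forall_and]

lemma generateFrom_cset [m : MeasurableSpace X] [hb : BorelSpace X] :
    m = MeasurableSpace.generateFrom (Set.range (cset (X := X))) := by
  apply le_antisymm
  · rw [hb.measurable_eq, (isBasis_countableBasis X).borel_eq_generateFrom]
    apply MeasurableSpace.generateFrom_le
    intro t ht
    have h1 : MeasurableSet[MeasurableSpace.generateFrom (Set.range (cset (X := X)))]
        (cset {⟨t, ht⟩}) := MeasurableSpace.measurableSet_generateFrom ⟨_, rfl⟩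
    have h2 := h1.compl
    simpa [cset] using h2
  · apply MeasurableSpace.generateFrom_le
    rintro _ ⟨s, rfl⟩
    exact (isClosed_cset s).measurableSet

variable [MeasurableSpace X] [BorelSpace X]

lemma bump_integrable (μ : Measure X) [IsFiniteMeasure μ] (κ : BI X) : Integrable (bump κ) μ :=
  (integrable_const (1 : ℝ)).mono' (bump_cont κ).aestronglyMeasurable
    (ae_of_all _ fun x => abs_bump_le κ x)

lemma tendsto_integral_bump_smul {Y : Type} [MeasurableSpace Y] (γ : Measure Y)
    (f : Y → X) (hf : Measurable f) (u : Y → ℝ) (hu : Integrable u γ)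
    (s : Finset (countableBasis X)) :
    Tendsto (fun n => ∫ y, bump (s, n) (f y) * u y ∂γ) atTop
      (𝓝 (∫ y in f ⁻¹' (cset s), u y ∂γ)) := by
  rw [← integral_indicator (hf (isClosed_cset s).measurableSet)]
  refine tendsto_integral_of_dominated_convergence (fun y => |u y|) (fun n => ?_) hu.abs
    (fun n => ae_of_all _ fun y => ?_) (ae_of_all _ fun y => ?_)
  · exact ((bump_cont _).measurable.comp hf).aestronglyMeasurable.mul hu.aestronglyMeasurable
  · rw [Real.norm_eq_abs, abs_mul]
    exact mul_le_of_le_one_left (abs_nonneg _) (abs_bump_le _ _)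
  · have := (bump_tendsto s (f y)).mul_const (u y)
    convert this using 2
    by_cases hy : f y ∈ cset s <;> simp [hy]

lemma tendsto_integral_bump (γ : Measure X) [IsFiniteMeasure γ] (s : Finset (countableBasis X)) :
    Tendsto (fun n => ∫ y, bump (s, n) y ∂γ) atTop (𝓝 (γ.real (cset s))) := by
  have := tendsto_integral_bump_smul γ id measurable_id (fun _ => (1 : ℝ)) (integrable_const _) s
  simpa using this

lemma ext_of_bump (μ ν : Measure X) [IsFiniteMeasure μ] [IsFiniteMeasure ν]
    (h : ∀ κ, ∫ x, bump κ x ∂μ = ∫ x, bump κ x ∂ν) : μ = ν := by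
  have key : ∀ s : Finset (countableBasis X), μ (cset s) = ν (cset s) := by
    intro s
    have h1 := tendsto_integral_bump μ s
    simp_rw [h] at h1
    have := tendsto_nhds_unique h1 (tendsto_integral_bump ν s)
    rwa [measureReal_eq_measureReal_iff] at this
  refine ext_of_generate_finite _ generateFrom_cset isPiSystem_cset ?_ ?_
  · rintro _ ⟨s, rfl⟩; exact key s
  · simpa [cset] using key ∅

lemma measurable_of_bump {S : Type} [MeasurableSpace S] (γ : S → Measure X)
    [∀ θ, IsProbabilityMeasure (γ θ)] (h : ∀ κ, Measurable fun θ => ∫ x, bump κ x ∂(γ θ)) :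
    Measurable γ := by
  refine Measurable.measure_of_isPiSystem_of_isProbabilityMeasure generateFrom_cset
    isPiSystem_cset ?_
  rintro _ ⟨s, rfl⟩
  have h1 : Measurable fun θ => (γ θ).real (cset s) := by
    refine measurable_of_tendsto_metrizable (f := fun n θ => ∫ x, bump (s, n) x ∂(γ θ))
      (fun n => h _) ?_
    rw [tendsto_pi_nhds]
    exact fun θ => tendsto_integral_bump (γ θ) s
  have h2 : (fun θ => γ θ (cset s)) = fun θ => ENNReal.ofReal ((γ θ).real (cset s)) := by
    ext θ; rw [ofReal_measureReal]
  rw [h2]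
  exact h1.ennreal_ofReal

end Bump

/-- Measurable selection for moment constraints. -/
theorem MSys.exists_kernel {Z ι S : Type} [PseudoEMetricSpace Z]
    [SecondCountableTopology Z] [T2Space Z] [LocallyCompactSpace Z] [MeasurableSpace Z]
    [BorelSpace Z] [MeasurableSpace S] [Countable ι] (M : MSys Z ι) (a : S → ι → ℝ)
    (ha : ∀ k, Measurable fun θ => a θ k) (hF : ∀ θ, M.Feas (a θ))
    (hT : ∀ θ, Tendsto (fun n => a θ (M.T n)) atTop (𝓝 0))
    (hpr : ∀ θ γ, M.Sat (a θ) γ → IsProbabilityMeasure γ) :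
    ∃ γ : Kernel S Z, IsMarkovKernel γ ∧ ∀ θ, M.Sat (a θ) (γ θ) := by
  obtain ⟨e, he⟩ := exists_surjective_nat (BI Z)
  obtain ⟨β, hβ, h⟩ := M.exists_pinned a ha hF hT (fun n => bump (e n)) (fun n => bump_cont _)
    (fun n z => abs_bump_le _ _)
  choose γ hγ1 hγ2 using h
  have : ∀ θ, IsProbabilityMeasure (γ θ) := fun θ => hpr θ _ (hγ1 θ)
  have hm : Measurable γ := by
    apply measurable_of_bump
    intro κ
    obtain ⟨n, rfl⟩ := he κ
    simp_rw [hγ2]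
    exact hβ n
  exact ⟨⟨γ, hm⟩, ⟨this⟩, hγ1⟩

section Lsc

variable {Z : Type} [PseudoMetricSpace Z]

/-- truncated inf-convolution -/
def infc (f : Z → ENNReal) (m : ℕ) (z : Z) : ℝ :=
  ⨅ z', ((min (f z') m).toReal + m * dist z z')

variable (f : Z → ENNReal)

lemma infc_bdd (m : ℕ) (z : Z) :
    BddBelow (Set.range fun z' => ((min (f z') m).toReal + m * dist z z')) :=
  ⟨0, by rintro _ ⟨z', rfl⟩; positivity⟩

lemma infc_nonneg (m : ℕ) (z : Z) : 0 ≤ infc f m z :=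
  Real.iInf_nonneg fun z' => by positivity

lemma infc_le (m : ℕ) (z : Z) : infc f m z ≤ (min (f z) m).toReal := by
  have := ciInf_le (infc_bdd f m z) z
  simpa [infc] using this

lemma infc_le_nat (m : ℕ) (z : Z) : infc f m z ≤ m := by
  refine (infc_le f m z).trans ?_
  have : min (f z) m ≤ m := min_le_right _ _
  simpa using ENNReal.toReal_mono (by simp) this

lemma infc_cont (m : ℕ) : Continuous (infc f m) := by
  refine (LipschitzWith.of_le_add_mul (m : NNReal) fun x y => ?_).continuous
  have : Nonempty Z := ⟨x⟩
  rw [← sub_le_iff_le_add]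
  refine le_ciInf fun z' => ?_
  rw [sub_le_iff_le_add]
  refine (ciInf_le (infc_bdd f m x) z').trans ?_
  have := mul_le_mul_of_nonneg_left (dist_triangle x y z') (Nat.cast_nonneg (α := ℝ) m)
  simp only [NNReal.coe_natCast]
  linarith

lemma infc_mono (z : Z) : Monotone fun m => infc f m z := by
  intro m n hmn
  have : Nonempty Z := ⟨z⟩
  refine ciInf_mono (infc_bdd f m z) fun z' => ?_
  have h : (m : ℝ) ≤ n := by exact_mod_cast hmn
  have h' : (m : ENNReal) ≤ n := by exact_mod_cast hmn
  gcongr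
  exact ne_top_of_le_ne_top (by simp) (min_le_right _ _)

lemma iSup_infc (hf : LowerSemicontinuous f) (z : Z) :
    ⨆ m, ENNReal.ofReal (infc f m z) = f z := by
  have : Nonempty Z := ⟨z⟩
  apply le_antisymm
  · refine iSup_le fun m => ?_
    refine (ENNReal.ofReal_le_ofReal (infc_le f m z)).trans ?_
    rw [ENNReal.ofReal_toReal (ne_top_of_le_ne_top (by simp) (min_le_right _ _))]
    exact min_le_left _ _
  · refine le_of_forall_lt fun r hr => ?_
    obtain ⟨r', hr1, hr2⟩ := exists_between hr
    have hr't : r' ≠ ⊤ := ne_top_of_lt hr2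
    have hev := hf z r' hr2
    obtain ⟨δ, hδ, hball⟩ := Metric.eventually_nhds_iff.1 hev
    obtain ⟨m1, hm1⟩ := exists_nat_ge (r'.toReal)
    obtain ⟨m2, hm2⟩ := exists_nat_ge (r'.toReal / δ)
    refine lt_of_lt_of_le hr1 (le_iSup_of_le (max m1 m2) ?_)
    rw [ENNReal.le_ofReal_iff_toReal_le hr't (infc_nonneg _ _ _)]
    refine le_ciInf fun z' => ?_
    have c1 : (m1 : ℝ) ≤ ((max m1 m2 : ℕ) : ℝ) := by exact_mod_cast le_max_left _ _
    have c2 : (m2 : ℝ) ≤ ((max m1 m2 : ℕ) : ℝ) := by exact_mod_cast le_max_right _ _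
    set m := max m1 m2
    by_cases hz : dist z' z < δ
    · have h1 : r' ≤ min (f z') m := by
        refine le_min (hball hz).le ?_
        rw [← ENNReal.ofReal_toReal hr't, ← ENNReal.ofReal_natCast]
        exact ENNReal.ofReal_le_ofReal (hm1.trans c1)
      have h2 := ENNReal.toReal_mono (ne_top_of_le_ne_top (by simp) (min_le_right _ _)) h1
      have : 0 ≤ (m : ℝ) * dist z z' := by positivity
      linarith
    · push Not at hz
      rw [dist_comm] at hz
      have h1 : r'.toReal ≤ m2 * δ := by rwa [div_le_iff₀ hδ] at hm2
      have h2 : (m2 : ℝ) * δ ≤ m * dist z z' := by gcongr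
      have : 0 ≤ (min (f z') m).toReal := by positivity
      linarith

end Lsc

section Strassen

variable {d : ℕ}

lemma strassen_aux (P Q : Measure (Euc d)) (hcx : ConvexOrder P Q) (φ ψ : Euc d → ℝ)
    (B : Euc d → (Euc d →L[ℝ] ℝ))
    (h1 : Integrable φ P) (h2 : Integrable ψ P) (h3 : Integrable φ Q) (h4 : Integrable ψ Q)
    (h0 : ∀ x y, 0 ≤ φ x + ψ y + B x (y - x)) : 0 ≤ ∫ x, φ x ∂P + ∫ y, ψ y ∂Q := by
  let u : Euc d → ℝ := fun y => ⨆ x, (-φ x - B x (y - x))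
  have hbdd : ∀ y, BddAbove (Set.range fun x => (-φ x - B x (y - x))) := fun y =>
    ⟨ψ y, by rintro _ ⟨x, rfl⟩; have := h0 x y; dsimp only; linarith⟩
  have hu1 : ∀ y, u y ≤ ψ y := fun y => ciSup_le fun x => by have := h0 x y; linarith
  have hu2 : ∀ y, -φ y ≤ u y := fun y => by
    have := le_ciSup (hbdd y) y
    rw [sub_self, map_zero, sub_zero] at this
    exact this
  have hconv : ConvexOn ℝ Set.univ u := by
    refine ⟨convex_univ, fun y _ z _ a b ha hb hab => ciSup_le fun x => ?_⟩
    have e1 := mul_le_mul_of_nonneg_left (le_ciSup (hbdd y) x) ha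
    have e2 := mul_le_mul_of_nonneg_left (le_ciSup (hbdd z) x) hb
    have e3 : a • y + b • z - x = a • (y - x) + b • (z - x) := by
      rw [smul_sub, smul_sub]
      have : x = a • x + b • x := by rw [← add_smul, hab, one_smul]
      nth_rewrite 1 [this]; abel
    rw [e3, map_add, map_smul, map_smul]
    simp only [smul_eq_mul]
    have e4 : φ x = a * φ x + b * φ x := by rw [← add_mul, hab, one_mul]
    change _ ≤ a * (⨆ x, (-φ x - B x (y - x))) + b * (⨆ x, (-φ x - B x (z - x)))
    linarith
  have hmeas : Measurable u := by
    refine (lowerSemicontinuous_ciSup hbdd fun x => Continuous.lowerSemicontinuous ?_).measurable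
    fun_prop
  have hbound : ∀ y, ‖u y‖ ≤ |φ y| + |ψ y| := fun y => by
    rw [Real.norm_eq_abs, abs_le]
    constructor
    · linarith [hu2 y, le_abs_self (φ y), abs_nonneg (ψ y)]
    · linarith [hu1 y, le_abs_self (ψ y), abs_nonneg (φ y)]
  have i1 : Integrable u P :=
    (h1.abs.add h2.abs).mono' hmeas.aestronglyMeasurable (ae_of_all _ hbound)
  have i2 : Integrable u Q :=
    (h3.abs.add h4.abs).mono' hmeas.aestronglyMeasurable (ae_of_all _ hbound)
  have c1 := hcx u hconv i1 i2
  have c2 : ∫ x, -φ x ∂P ≤ ∫ x, u x ∂P := integral_mono h1.neg i1 hu2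
  have c3 : ∫ x, u x ∂Q ≤ ∫ x, ψ x ∂Q := integral_mono i2 h4 hu1
  rw [integral_neg] at c2
  linarith

/-- Index type of the base constraints. -/
abbrev BIdx (d : ℕ) : Type :=
  Unit ⊕ ℕ ⊕ (Bool × BI (Euc d)) ⊕ (Bool × BI (Euc d)) ⊕ (Bool × BI (Euc d) × Fin d)

def sgn (b : Bool) : ℝ := if b then 1 else -1

lemma abs_sgn (b : Bool) : |sgn b| = 1 := by cases b <;> simp [sgn]

def tl (n : ℕ) (x : Euc d) : ℝ := 3 * max 0 (2 * ‖x‖ - (n + 1))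

def bφ : BIdx d → Euc d → ℝ
  | .inl _ => fun x => 1 + ‖x‖
  | .inr (.inl n) => tl n
  | .inr (.inr (.inl (b, κ))) => fun x => sgn b * bump κ x
  | .inr (.inr (.inr (.inl _))) => fun _ => 0
  | .inr (.inr (.inr (.inr _))) => fun _ => 0

def bψ : BIdx d → Euc d → ℝ
  | .inl _ => fun x => ‖x‖
  | .inr (.inl n) => tl n
  | .inr (.inr (.inl _)) => fun _ => 0
  | .inr (.inr (.inr (.inl (b, κ)))) => fun x => sgn b * bump κ x
  | .inr (.inr (.inr (.inr _))) => fun _ => 0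

def bB : BIdx d → Euc d → (Euc d →L[ℝ] ℝ)
  | .inl _ => fun _ => 0
  | .inr (.inl _) => fun _ => 0
  | .inr (.inr (.inl _)) => fun _ => 0
  | .inr (.inr (.inr (.inl _))) => fun _ => 0
  | .inr (.inr (.inr (.inr (b, κ, l)))) => fun x => (sgn b * bump κ x) • EuclideanSpace.proj l

def bh (k : BIdx d) (z : Euc d × Euc d) : ℝ := bφ k z.1 + bψ k z.2 + bB k z.1 (z.2 - z.1)

lemma tl_cont (n : ℕ) : Continuous (tl (d := d) n) := by unfold tl; fun_prop

lemma tl_nonneg (n : ℕ) (x : Euc d) : 0 ≤ tl n x := by unfold tl; positivity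

lemma tl_le (n : ℕ) (x : Euc d) : tl n x ≤ 6 * ‖x‖ := by
  have : max 0 (2 * ‖x‖ - ((n : ℝ) + 1)) ≤ 2 * ‖x‖ :=
    max_le (by positivity) (by linarith [Nat.cast_nonneg (α := ℝ) n])
  unfold tl; linarith

lemma bφ_cont (k : BIdx d) : Continuous (bφ k) := by
  rcases k with _ | n | ⟨b, κ⟩ | ⟨b, κ⟩ | ⟨b, κ, l⟩ <;> simp only [bφ]
  · fun_prop
  · exact tl_cont n
  · exact continuous_const.mul (bump_cont κ)
  · fun_prop
  · fun_prop

lemma bψ_cont (k : BIdx d) : Continuous (bψ k) := by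
  rcases k with _ | n | ⟨b, κ⟩ | ⟨b, κ⟩ | ⟨b, κ, l⟩ <;> simp only [bψ]
  · fun_prop
  · exact tl_cont n
  · fun_prop
  · exact continuous_const.mul (bump_cont κ)
  · fun_prop

lemma abs_sgn_bump (b : Bool) (κ : BI (Euc d)) (x : Euc d) : |sgn b * bump κ x| ≤ 1 := by
  rw [abs_mul, abs_sgn, one_mul]; exact abs_bump_le κ x

lemma bφ_le (k : BIdx d) (x : Euc d) : |bφ k x| ≤ 6 * (1 + ‖x‖) := by
  have hx := norm_nonneg x
  rcases k with _ | n | ⟨b, κ⟩ | ⟨b, κ⟩ | ⟨b, κ, l⟩ <;> simp only [bφ]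
  · rw [abs_of_nonneg (by positivity)]; linarith
  · rw [abs_of_nonneg (tl_nonneg n x)]; linarith [tl_le n x]
  · linarith [abs_sgn_bump b κ x]
  · simp; linarith
  · simp; linarith

lemma bψ_le (k : BIdx d) (x : Euc d) : |bψ k x| ≤ 6 * (1 + ‖x‖) := by
  have hx := norm_nonneg x
  rcases k with _ | n | ⟨b, κ⟩ | ⟨b, κ⟩ | ⟨b, κ, l⟩ <;> simp only [bψ]
  · rw [abs_of_nonneg (by positivity)]; linarith
  · rw [abs_of_nonneg (tl_nonneg n x)]; linarith [tl_le n x]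
  · simp; linarith
  · linarith [abs_sgn_bump b κ x]
  · simp; linarith

lemma bB_cont (k : BIdx d) : Continuous fun z : Euc d × Euc d => bB k z.1 (z.2 - z.1) := by
  rcases k with _ | n | ⟨b, κ⟩ | ⟨b, κ⟩ | ⟨b, κ, l⟩ <;> simp only [bB]
  · simpa using continuous_const
  · simpa using continuous_const
  · simpa using continuous_const
  · simpa using continuous_const
  · have := (bump_cont κ).comp (continuous_fst (X := Euc d) (Y := Euc d))
    simp only [_root_.smul_apply, smul_eq_mul]
    refine (continuous_const.mul this).mul ?_
    fun_prop

lemma bB_le (k : BIdx d) (z : Euc d × Euc d) : |bB k z.1 (z.2 - z.1)| ≤ ‖z.1‖ + ‖z.2‖ := by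
  have hx := norm_nonneg z.1
  have hy := norm_nonneg z.2
  rcases k with _ | n | ⟨b, κ⟩ | ⟨b, κ⟩ | ⟨b, κ, l⟩ <;> simp only [bB]
  · simp; linarith
  · simp; linarith
  · simp; linarith
  · simp; linarith
  · simp only [_root_.smul_apply, smul_eq_mul]
    rw [abs_mul]
    refine (mul_le_of_le_one_left (abs_nonneg _) (abs_sgn_bump b κ z.1)).trans ?_
    have h1 := PiLp.norm_apply_le (z.2 - z.1) l
    have h2 := norm_sub_le z.2 z.1
    change |(z.2 - z.1) l| ≤ _
    rw [Real.norm_eq_abs] at h1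
    linarith

lemma bh_le (k : BIdx d) (z : Euc d × Euc d) : |bh k z| ≤ 13 * (1 + ‖z.1‖ + ‖z.2‖) := by
  have h1 := bφ_le k z.1
  have h2 := bψ_le k z.2
  have h3 := bB_le k z
  have h4 := abs_add_three (bφ k z.1) (bψ k z.2) (bB k z.1 (z.2 - z.1))
  have hx := norm_nonneg z.1
  have hy := norm_nonneg z.2
  unfold bh
  linarith

def bSys (d : ℕ) : MSys (Euc d × Euc d) (BIdx d) where
  w := fun z => 1 + ‖z.1‖ + ‖z.2‖
  w_cont := by fun_prop
  one_le_w := fun z => by linarith [norm_nonneg z.1, norm_nonneg z.2]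
  h := bh
  h_cont := fun k => (((bφ_cont k).comp continuous_fst).add ((bψ_cont k).comp continuous_snd)).add
    (bB_cont k)
  cst := fun _ => 13
  h_le := bh_le
  iw := .inl ()
  h_iw := by ext z; simp [bh, bφ, bψ, bB]
  T := fun n => .inr (.inl n)
  K := fun n => Metric.closedBall 0 (n + 1)
  K_cpt := fun n => isCompact_closedBall _ _
  K_ex := fun z => by
    obtain ⟨N, hN⟩ := exists_nat_ge ‖z‖
    filter_upwards [eventually_ge_atTop N] with n hn
    rw [mem_closedBall_zero_iff]
    have : (N : ℝ) ≤ n := by exact_mod_cast hn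
    linarith
  T_nonneg := fun n z => by
    have := tl_nonneg n z.1
    have := tl_nonneg n z.2
    simp [bh, bφ, bψ, bB]; linarith
  T_ge := fun n z hz => by
    rw [mem_closedBall_zero_iff, not_le, Prod.norm_def] at hz
    have e1 := tl_nonneg n z.1
    have e2 := tl_nonneg n z.2
    have e3 : 3 * (2 * ‖z.1‖ - (n + 1)) ≤ tl n z.1 := by
      unfold tl; linarith [le_max_right 0 (2 * ‖z.1‖ - ((n : ℝ) + 1))]
    have e4 : 3 * (2 * ‖z.2‖ - (n + 1)) ≤ tl n z.2 := by
      unfold tl; linarith [le_max_right 0 (2 * ‖z.2‖ - ((n : ℝ) + 1))]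
    have e5 : (0 : ℝ) ≤ n := Nat.cast_nonneg n
    simp only [bh, bφ, bψ, bB, _root_.zero_apply, add_zero]
    rcases le_total ‖z.1‖ ‖z.2‖ with h | h
    · rw [max_eq_right h] at hz; linarith
    · rw [max_eq_left h] at hz; linarith

def ba (P Q : Measure (Euc d)) (k : BIdx d) : ℝ := ∫ x, bφ k x ∂P + ∫ y, bψ k y ∂Q

lemma integrable_of_growth (P : Measure (Euc d)) [IsProbabilityMeasure P]
    (hP : FiniteFirstMoment P) {f : Euc d → ℝ} (hf : Continuous f)
    (h : ∀ x, |f x| ≤ 6 * (1 + ‖x‖)) : Integrable f P :=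
  (((integrable_const (1 : ℝ)).add hP.norm).const_mul 6).mono' hf.aestronglyMeasurable
    (ae_of_all _ h)

lemma base_feas (P Q : Measure (Euc d)) [IsProbabilityMeasure P] [IsProbabilityMeasure Q]
    (hP : FiniteFirstMoment P) (hQ : FiniteFirstMoment Q) (hcx : ConvexOrder P Q) :
    (bSys d).Feas (ba P Q) := by
  intro s l hl h0
  have i1 := fun k => integrable_of_growth P hP (bφ_cont k) (bφ_le k)
  have i2 := fun k => integrable_of_growth P hP (bψ_cont k) (bψ_le k)
  have i3 := fun k => integrable_of_growth Q hQ (bφ_cont k) (bφ_le k)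
  have i4 := fun k => integrable_of_growth Q hQ (bψ_cont k) (bψ_le k)
  have := strassen_aux P Q hcx (fun x => ∑ k ∈ s, l k * bφ k x) (fun x => ∑ k ∈ s, l k * bψ k x)
    (fun x => ∑ k ∈ s, l k • bB k x)
    (integrable_finsetSum _ fun k _ => (i1 k).const_mul _)
    (integrable_finsetSum _ fun k _ => (i2 k).const_mul _)
    (integrable_finsetSum _ fun k _ => (i3 k).const_mul _)
    (integrable_finsetSum _ fun k _ => (i4 k).const_mul _)
    (fun x y => by
      have := h0 (x, y)
      simp only [bSys, bh, mul_add, Finset.sum_add_distrib] at this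
      simpa [_root_.sum_apply] using this)
  rw [integral_finsetSum _ (fun k _ => (i1 k).const_mul _),
    integral_finsetSum _ (fun k _ => (i4 k).const_mul _), ← Finset.sum_add_distrib] at this
  simp_rw [integral_const_mul, ← mul_add] at this
  exact this

lemma tl_tendsto (P : Measure (Euc d)) (hP : FiniteFirstMoment P) :
    Tendsto (fun n => ∫ x, tl n x ∂P) atTop (𝓝 0) := by
  have : Tendsto (fun n => ∫ x, tl n x ∂P) atTop (𝓝 (∫ _x : Euc d, (0 : ℝ) ∂P)) := by
    refine tendsto_integral_of_dominated_convergence (fun x => 6 * ‖x‖)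
      (fun n => (tl_cont n).aestronglyMeasurable) (hP.norm.const_mul 6)
      (fun n => ae_of_all _ fun x => ?_) (ae_of_all _ fun x => ?_)
    · rw [Real.norm_eq_abs, abs_of_nonneg (tl_nonneg n x)]; exact tl_le n x
    · obtain ⟨N, hN⟩ := exists_nat_ge (2 * ‖x‖)
      apply tendsto_const_nhds.congr'
      filter_upwards [eventually_ge_atTop N] with n hn
      have : (N : ℝ) ≤ n := by exact_mod_cast hn
      unfold tl
      rw [max_eq_left (by linarith), mul_zero]
  simpa using this

lemma ba_tendsto (P Q : Measure (Euc d)) (hP : FiniteFirstMoment P) (hQ : FiniteFirstMoment Q) :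
    Tendsto (fun n => ba P Q ((bSys d).T n)) atTop (𝓝 0) := by
  have := (tl_tendsto P hP).add (tl_tendsto Q hQ)
  rw [add_zero] at this
  exact this

/-- coupling + martingale implies the constraints -/
lemma sat_of_coupling (P Q : Measure (Euc d)) [IsProbabilityMeasure P] [IsProbabilityMeasure Q]
    (hP : FiniteFirstMoment P) (hQ : FiniteFirstMoment Q) (γ : Measure (Euc d × Euc d))
    [IsProbabilityMeasure γ] (hc : IsCoupling γ P Q) (hm : IsMartingaleCoupling γ) :
    (bSys d).Sat (ba P Q) γ := by
  obtain ⟨hc1, hc2⟩ := hc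
  have hX : Integrable (fun z : Euc d × Euc d => z.1) γ := by
    have h : Integrable (fun x : Euc d => x) (γ.map Prod.fst) := by rw [hc1]; exact hP
    exact h.comp_measurable measurable_fst
  have hY : Integrable (fun z : Euc d × Euc d => z.2) γ := by
    have h : Integrable (fun x : Euc d => x) (γ.map Prod.snd) := by rw [hc2]; exact hQ
    exact h.comp_measurable measurable_snd
  have hle : fstSigma d ≤ (inferInstance : MeasurableSpace (Euc d × Euc d)) := measurable_fst.comap_le
  have key : ∀ κ : BI (Euc d), ∫ z, bump κ z.1 • z.2 ∂γ = ∫ z, bump κ z.1 • z.1 ∂γ := by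
    intro κ
    have hb : StronglyMeasurable[fstSigma d] (fun z : Euc d × Euc d => bump κ z.1) :=
      ((bump_cont κ).measurable.comp (comap_measurable Prod.fst)).stronglyMeasurable
    have hbY : Integrable ((fun z : Euc d × Euc d => bump κ z.1) • fun z : Euc d × Euc d => z.2) γ :=
      hY.bdd_smul 1 ((hb.mono hle).aestronglyMeasurable)
        (ae_of_all _ fun z => by simpa using abs_bump_le κ z.1)
    have h1 := condExp_smul_of_aestronglyMeasurable_left (μ := γ) (m := fstSigma d)
      hb.aestronglyMeasurable hbY hY
    have h2 := integral_condExp (μ := γ) hle (f := (fun z : Euc d × Euc d => bump κ z.1) • fun z : Euc d × Euc d => z.2)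
    have h3 : ∫ z, (γ[(fun z : Euc d × Euc d => bump κ z.1) • fun z : Euc d × Euc d => z.2 | fstSigma d]) z ∂γ
        = ∫ z, bump κ z.1 • z.1 ∂γ := by
      refine integral_congr_ae (h1.trans ?_)
      filter_upwards [hm] with z hz
      simp only [Pi.smul_apply', hz]
    rw [← h3, h2]
    rfl
  refine ⟨inferInstance, ?_, fun k => le_of_eq ?_⟩
  · exact ((integrable_const (1 : ℝ)).add hX.norm).add hY.norm
  have j1 : Integrable (fun z : Euc d × Euc d => bφ k z.1) γ := by
    have h : Integrable (bφ k) (γ.map Prod.fst) := by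
      rw [hc1]; exact integrable_of_growth P hP (bφ_cont k) (bφ_le k)
    exact h.comp_measurable measurable_fst
  have j2 : Integrable (fun z : Euc d × Euc d => bψ k z.2) γ := by
    have h : Integrable (bψ k) (γ.map Prod.snd) := by
      rw [hc2]; exact integrable_of_growth Q hQ (bψ_cont k) (bψ_le k)
    exact h.comp_measurable measurable_snd
  have j3 : Integrable (fun z : Euc d × Euc d => bB k z.1 (z.2 - z.1)) γ :=
    (hX.norm.add hY.norm).mono' (bB_cont k).aestronglyMeasurable (ae_of_all _ (bB_le k))
  have e1 : ∫ z, bφ k z.1 ∂γ = ∫ x, bφ k x ∂P := by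
    rw [← hc1, integral_map measurable_fst.aemeasurable (bφ_cont k).aestronglyMeasurable]
  have e2 : ∫ z, bψ k z.2 ∂γ = ∫ x, bψ k x ∂Q := by
    rw [← hc2, integral_map measurable_snd.aemeasurable (bψ_cont k).aestronglyMeasurable]
  have e3 : ∫ z, bB k z.1 (z.2 - z.1) ∂γ = 0 := by
    rcases k with _ | n | ⟨b, κ⟩ | ⟨b, κ⟩ | ⟨b, κ, l⟩ <;> simp only [bB]
    · simp
    · simp
    · simp
    · simp
    · have b1 : Integrable (fun z : Euc d × Euc d => bump κ z.1 • z.2) γ :=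
        hY.bdd_smul 1 ((bump_cont κ).comp continuous_fst).aestronglyMeasurable
          (ae_of_all _ fun z => by simpa using abs_bump_le κ z.1)
      have b2 : Integrable (fun z : Euc d × Euc d => bump κ z.1 • z.1) γ :=
        hX.bdd_smul 1 ((bump_cont κ).comp continuous_fst).aestronglyMeasurable
          (ae_of_all _ fun z => by simpa using abs_bump_le κ z.1)
      have h5 : ∫ z : Euc d × Euc d, (bump κ z.1 • z.2 - bump κ z.1 • z.1) ∂γ = 0 := by
        rw [integral_sub b1 b2, key, sub_self]
      have h6 := (EuclideanSpace.proj (𝕜 := ℝ) l : Euc d →L[ℝ] ℝ).integral_comp_comm (b1.sub b2)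
      have h7 : ∀ z : Euc d × Euc d,
          ((sgn b * bump κ z.1) • (EuclideanSpace.proj (𝕜 := ℝ) l : Euc d →L[ℝ] ℝ)) (z.2 - z.1)
          = sgn b * (EuclideanSpace.proj (𝕜 := ℝ) l : Euc d →L[ℝ] ℝ)
            (bump κ z.1 • z.2 - bump κ z.1 • z.1) := by
        intro z
        rw [← smul_sub, map_smul, _root_.smul_apply, smul_eq_mul, smul_eq_mul,
          mul_assoc]
      simp_rw [h7]
      rw [integral_const_mul]
      simp only [Pi.sub_apply] at h6
      rw [h6, h5]; simp
  calc ∫ z, bh k z ∂γ = ∫ z, bφ k z.1 ∂γ + ∫ z, bψ k z.2 ∂γ + ∫ z, bB k z.1 (z.2 - z.1) ∂γ := by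
        unfold bh
        have j12 : Integrable (fun z : Euc d × Euc d => bφ k z.1 + bψ k z.2) γ := j1.add j2
        rw [integral_add j12 j3, integral_add j1 j2]
    _ = ba P Q k := by rw [e1, e2, e3, add_zero]; rfl

lemma eq_of_sgn {Y : Type} [MeasurableSpace Y] (γ : Measure Y) (u : Y → ℝ) (r : ℝ)
    (h : ∀ b, ∫ y, sgn b * u y ∂γ ≤ sgn b * r) : ∫ y, u y ∂γ = r := by
  have h1 := h true
  have h2 := h false
  rw [integral_const_mul] at h1 h2
  simp [sgn] at h1 h2
  linarith

/-- the constraints imply coupling + martingale -/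
lemma coupling_of_sat (P Q : Measure (Euc d)) [IsProbabilityMeasure P] [IsProbabilityMeasure Q]
    (γ : Measure (Euc d × Euc d)) (hs : (bSys d).Sat (ba P Q) γ) :
    IsProbabilityMeasure γ ∧ IsCoupling γ P Q ∧ IsMartingaleCoupling γ := by
  obtain ⟨hfin, hw, hk⟩ := hs
  have hX : Integrable (fun z : Euc d × Euc d => z.1) γ :=
    hw.mono' continuous_fst.aestronglyMeasurable (ae_of_all _ fun z => by
      change ‖z.1‖ ≤ 1 + ‖z.1‖ + ‖z.2‖
      linarith [norm_nonneg z.2])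
  have hY : Integrable (fun z : Euc d × Euc d => z.2) γ :=
    hw.mono' continuous_snd.aestronglyMeasurable (ae_of_all _ fun z => by
      change ‖z.2‖ ≤ 1 + ‖z.1‖ + ‖z.2‖
      linarith [norm_nonneg z.1])
  have hc1 : γ.map Prod.fst = P := by
    have : IsFiniteMeasure (γ.map (Prod.fst : Euc d × Euc d → Euc d)) := inferInstance
    refine ext_of_bump _ _ fun κ => ?_
    rw [integral_map measurable_fst.aemeasurable (bump_cont κ).aestronglyMeasurable]
    refine eq_of_sgn γ _ _ fun b => ?_
    have := hk (.inr (.inr (.inl (b, κ))))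
    simpa [bSys, bh, ba, bφ, bψ, bB, integral_const_mul] using this
  have hc2 : γ.map Prod.snd = Q := by
    have : IsFiniteMeasure (γ.map (Prod.snd : Euc d × Euc d → Euc d)) := inferInstance
    refine ext_of_bump _ _ fun κ => ?_
    rw [integral_map measurable_snd.aemeasurable (bump_cont κ).aestronglyMeasurable]
    refine eq_of_sgn γ _ _ fun b => ?_
    have := hk (.inr (.inr (.inr (.inl (b, κ)))))
    simpa [bSys, bh, ba, bφ, bψ, bB, integral_const_mul] using this
  have hpr : IsProbabilityMeasure γ := by
    constructor
    have : γ.map Prod.fst Set.univ = 1 := by rw [hc1]; simp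
    rwa [Measure.map_apply measurable_fst MeasurableSet.univ, Set.preimage_univ] at this
  refine ⟨hpr, ⟨hc1, hc2⟩, ?_⟩
  have hle : fstSigma d ≤ (inferInstance : MeasurableSpace (Euc d × Euc d)) := measurable_fst.comap_le
  have hD : ∀ l : Fin d, Integrable (fun z : Euc d × Euc d => (z.2 - z.1) l) γ := fun l =>
    (EuclideanSpace.proj (𝕜 := ℝ) l : Euc d →L[ℝ] ℝ).integrable_comp (hY.sub hX)
  have hb : ∀ (l : Fin d) (κ : BI (Euc d)), ∫ z, bump κ z.1 * (z.2 - z.1) l ∂γ = 0 := by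
    intro l κ
    refine eq_of_sgn γ _ _ fun b => ?_
    have := hk (.inr (.inr (.inr (.inr (b, κ, l)))))
    simpa [bSys, bh, ba, bφ, bψ, bB, mul_assoc] using this
  have htot : ∀ l : Fin d, ∫ z, (z.2 - z.1) l ∂γ = 0 := fun l => by
    have := hb l (∅, 0)
    simpa [bump_empty] using this
  have hset : ∀ (l : Fin d) (t : Set (Euc d)), MeasurableSet t →
      ∫ z in Prod.fst ⁻¹' t, (z.2 - z.1) l ∂γ = 0 := by
    intro l
    refine MeasurableSpace.induction_on_inter (C := fun t _ =>
      ∫ z in Prod.fst ⁻¹' t, (z.2 - z.1) l ∂γ = 0) generateFrom_cset isPiSystem_cset ?_ ?_ ?_ ?_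
    · simp
    · rintro _ ⟨s, rfl⟩
      have h1 := tendsto_integral_bump_smul γ Prod.fst measurable_fst
        (fun z : Euc d × Euc d => (z.2 - z.1) l) (hD l) s
      simp_rw [hb] at h1
      exact tendsto_nhds_unique h1 tendsto_const_nhds
    · intro t ht h
      have := integral_add_compl (measurable_fst ht : MeasurableSet (Prod.fst ⁻¹' t)) (hD l)
      rw [h, htot, zero_add] at this
      exact this
    · intro f hdis hf h
      rw [Set.preimage_iUnion, integral_iUnion (fun i => measurable_fst (hf i))
        (fun i j hij => (hdis hij).preimage _) (hD l).integrableOn]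
      simp only [h, tsum_zero]
  refine (ae_eq_condExp_of_forall_setIntegral_eq hle hY (fun s _ _ => hX.integrableOn) ?_ ?_).symm
  · rintro _ ⟨t, ht, rfl⟩ _
    have : ∫ z in Prod.fst ⁻¹' t, (z.2 - z.1) ∂γ = 0 := by
      ext l
      have h6 := (EuclideanSpace.proj (𝕜 := ℝ) l : Euc d →L[ℝ] ℝ).integral_comp_comm
        (μ := γ.restrict (Prod.fst ⁻¹' t)) (φ := fun z : Euc d × Euc d => z.2 - z.1)
        (hY.sub hX).integrableOn
      have h7 := hset l t ht
      exact h6.symm.trans h7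
    rw [integral_sub hY.integrableOn hX.integrableOn, sub_eq_zero] at this
    exact this.symm
  · exact (comap_measurable (Prod.fst : Euc d × Euc d → Euc d)).stronglyMeasurable.aestronglyMeasurable

end Strassen

section Final

variable {d : ℕ} {S : Type} [MeasurableSpace S]

lemma ba_measurable (P Q : Kernel S (Euc d)) [IsMarkovKernel P] [IsMarkovKernel Q] (k : BIdx d) :
    Measurable fun θ => ba (P θ) (Q θ) k := by
  unfold ba
  exact ((bφ_cont k).stronglyMeasurable.integral_kernel).measurable.add
    ((bψ_cont k).stronglyMeasurable.integral_kernel).measurable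

/-- The base system extended by the inf-convolution approximations of the cost. -/
def cSys (f : Euc d × Euc d → ENNReal) : MSys (Euc d × Euc d) (BIdx d ⊕ ℕ) :=
  (bSys d).ext (infc f) (infc_cont f) (fun m => m) (fun m z => by
    rw [abs_of_nonneg (infc_nonneg f m z)]
    exact (infc_le_nat f m z).trans
      (le_mul_of_one_le_right (Nat.cast_nonneg m) ((bSys d).one_le_w z)))

lemma cSys_sat (f : Euc d × Euc d → ENNReal) (a : BIdx d → ℝ) (t : ℝ)
    (γ : Measure (Euc d × Euc d)) :
    (cSys f).Sat (Sum.elim a fun _ => t) γ ↔ (bSys d).Sat a γ ∧ ∀ m, ∫ z, infc f m z ∂γ ≤ t :=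
  (bSys d).ext_sat _ _ _ _ _ _ _

lemma infc_integrable (f : Euc d × Euc d → ENNReal) (γ : Measure (Euc d × Euc d))
    [IsFiniteMeasure γ] (m : ℕ) : Integrable (infc f m) γ :=
  (integrable_const (m : ℝ)).mono' (infc_cont f m).aestronglyMeasurable
    (ae_of_all _ fun z => by
      rw [Real.norm_eq_abs, abs_of_nonneg (infc_nonneg f m z)]
      exact infc_le_nat f m z)

lemma lintegral_le_of_infc (f : Euc d × Euc d → ENNReal) (hf : LowerSemicontinuous f)
    (γ : Measure (Euc d × Euc d)) [IsFiniteMeasure γ] (t : ℝ) (h : ∀ m, ∫ z, infc f m z ∂γ ≤ t) :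
    ∫⁻ z, f z ∂γ ≤ ENNReal.ofReal t := by
  have h1 : ∀ z, f z = ⨆ m, ENNReal.ofReal (infc f m z) := fun z => (iSup_infc f hf z).symm
  simp_rw [h1]
  rw [lintegral_iSup (fun m => (infc_cont f m).measurable.ennreal_ofReal)
    (fun m n hmn z => ENNReal.ofReal_le_ofReal (infc_mono f z hmn))]
  refine iSup_le fun m => ?_
  rw [← ofReal_integral_eq_lintegral_ofReal (infc_integrable f γ m)
    (ae_of_all _ (infc_nonneg f m))]
  exact ENNReal.ofReal_le_ofReal (h m)

lemma infc_le_of_lintegral (f : Euc d × Euc d → ENNReal) (hf : LowerSemicontinuous f)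
    (γ : Measure (Euc d × Euc d)) [IsFiniteMeasure γ] (h : ∫⁻ z, f z ∂γ ≠ ⊤) (m : ℕ) :
    ∫ z, infc f m z ∂γ ≤ (∫⁻ z, f z ∂γ).toReal := by
  rw [← ENNReal.ofReal_le_iff_le_toReal h, ofReal_integral_eq_lintegral_ofReal
    (infc_integrable f γ m) (ae_of_all _ (infc_nonneg f m))]
  refine lintegral_mono fun z => ?_
  rw [← iSup_infc f hf z]
  exact le_iSup (fun m => ENNReal.ofReal (infc f m z)) m

theorem exists_opt_kernel (P Q : Kernel S (Euc d)) [IsMarkovKernel P] [IsMarkovKernel Q]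
    (hP : ∀ θ, FiniteFirstMoment (P θ)) (hQ : ∀ θ, FiniteFirstMoment (Q θ))
    (hcx : ∀ θ, ConvexOrder (P θ) (Q θ)) (f : Euc d × Euc d → ENNReal)
    (hf : LowerSemicontinuous f) :
    ∃ γ : Kernel S (Euc d × Euc d), IsMarkovKernel γ ∧
      ∀ θ, (IsCoupling (γ θ) (P θ) (Q θ) ∧ IsMartingaleCoupling (γ θ)) ∧
        ∀ μ' : Measure (Euc d × Euc d), IsProbabilityMeasure μ' →
          IsCoupling μ' (P θ) (Q θ) → IsMartingaleCoupling μ' →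
          ∫⁻ z, f z ∂(γ θ) ≤ ∫⁻ z, f z ∂μ' := by
  classical
  let a : S → BIdx d → ℝ := fun θ => ba (P θ) (Q θ)
  have ha : ∀ k, Measurable fun θ => a θ k := fun k => ba_measurable P Q k
  obtain ⟨γ₁, hγ₁, hs₁⟩ := (bSys d).exists_kernel a ha
    (fun θ => base_feas _ _ (hP θ) (hQ θ) (hcx θ)) (fun θ => ba_tendsto _ _ (hP θ) (hQ θ))
    (fun θ γ h => (coupling_of_sat _ _ γ h).1)
  let A : S → ℝ → BIdx d ⊕ ℕ → ℝ := fun θ t => Sum.elim (a θ) fun _ => t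
  let G : Set S := {θ | ∃ n : ℕ, (cSys f).Feas (A θ n)}
  have hG : MeasurableSet G := by
    have : G = ⋃ n : ℕ, {θ | (cSys f).Feas (A θ n)} := by
      ext θ; simp [G]
    rw [this]
    refine MeasurableSet.iUnion fun n => (cSys f).measurableSet_feas _ ?_
    rintro (k | m)
    · exact ha k
    · exact measurable_const
  -- a competitor with finite cost gives feasibility
  have hcomp : ∀ θ (μ' : Measure (Euc d × Euc d)), IsProbabilityMeasure μ' →
      IsCoupling μ' (P θ) (Q θ) → IsMartingaleCoupling μ' → ∫⁻ z, f z ∂μ' ≠ ⊤ →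
      (cSys f).Feas (A θ (∫⁻ z, f z ∂μ').toReal) := by
    intro θ μ' hμ h1 h2 h3
    refine MSys.Sat.feas (γ := μ') ((cSys_sat f _ _ _).2 ⟨?_, ?_⟩)
    · exact sat_of_coupling _ _ (hP θ) (hQ θ) μ' h1 h2
    · exact infc_le_of_lintegral f hf μ' h3
  have hcompG : ∀ θ t, (cSys f).Feas (A θ t) → θ ∈ G := by
    intro θ t h
    obtain ⟨n, hn⟩ := exists_nat_ge t
    refine ⟨n, h.mono ?_⟩
    rintro (k | m)
    · exact le_rfl
    · exact hn
  by_cases hne : G.Nonempty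
  swap
  · refine ⟨γ₁, hγ₁, fun θ => ⟨(coupling_of_sat _ _ _ (hs₁ θ)).2, fun μ' hμ h1 h2 => ?_⟩⟩
    by_cases h3 : ∫⁻ z, f z ∂μ' = ⊤
    · rw [h3]; exact le_top
    · exact absurd ⟨θ, hcompG _ _ (hcomp θ μ' hμ h1 h2 h3)⟩ hne
  obtain ⟨θ₀, hθ₀⟩ := hne
  let ρ : S → S := fun θ => if θ ∈ G then θ else θ₀
  have hρ : Measurable ρ := Measurable.ite hG measurable_id measurable_const
  have hρG : ∀ θ, ρ θ ∈ G := fun θ => by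
    by_cases h : θ ∈ G
    · simp [ρ, h]
    · simpa [ρ, h] using hθ₀
  obtain ⟨v, hv, hvf⟩ := (cSys f).step (fun θ t => A (ρ θ) t)
    (by
      rintro t (k | m)
      · exact (ha k).comp hρ
      · exact measurable_const)
    (by
      rintro θ (k | m)
      · exact continuous_const
      · exact continuous_id)
    (by
      rintro θ (k | m)
      · exact monotone_const
      · exact monotone_id)
    (fun θ => by
      obtain ⟨n, hn⟩ := hρG θ
      exact ⟨n, hn⟩)
    (fun θ => ⟨0, fun t ht => by
      have := ht {Sum.inr 0} (fun _ => 1) (fun _ => zero_le_one) (fun z => by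
        simpa [cSys, MSys.ext] using infc_nonneg f 0 z)
      simpa [A] using this⟩)
  obtain ⟨γ₂, hγ₂, hs₂⟩ := (cSys f).exists_kernel (fun θ => A (ρ θ) (v θ))
    (by
      rintro (k | m)
      · exact (ha k).comp hρ
      · exact hv)
    (fun θ => (hvf θ _).2 le_rfl) (fun θ => ba_tendsto _ _ (hP (ρ θ)) (hQ (ρ θ)))
    (fun θ γ h => (coupling_of_sat (P (ρ θ)) (Q (ρ θ)) γ ((cSys_sat f _ _ _).1 h).1).1)
  refine ⟨Kernel.piecewise hG γ₂ γ₁, inferInstance, fun θ => ?_⟩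
  by_cases hθ : θ ∈ G
  · have hr : ρ θ = θ := by simp [ρ, hθ]
    have hs := (cSys_sat f _ _ _).1 (hs₂ θ)
    rw [hr] at hs
    rw [Kernel.piecewise_apply, if_pos hθ]
    refine ⟨(coupling_of_sat _ _ _ hs.1).2, fun μ' hμ h1 h2 => ?_⟩
    by_cases h3 : ∫⁻ z, f z ∂μ' = ⊤
    · rw [h3]; exact le_top
    have h4 := hcomp θ μ' hμ h1 h2 h3
    have h5 := (hvf θ (∫⁻ z, f z ∂μ').toReal).1 (by rw [hr]; exact h4)
    refine (lintegral_le_of_infc f hf _ _ hs.2).trans ?_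
    exact ENNReal.ofReal_le_of_le_toReal h5
  · rw [Kernel.piecewise_apply, if_neg hθ]
    refine ⟨(coupling_of_sat _ _ _ (hs₁ θ)).2, fun μ' hμ h1 h2 => ?_⟩
    by_cases h3 : ∫⁻ z, f z ∂μ' = ⊤
    · rw [h3]; exact le_top
    · exact absurd (hcompG _ _ (hcomp θ μ' hμ h1 h2 h3)) hθ

lemma cost_lsc (c : Euc d × Euc d → EReal) (hc : LowerSemicontinuous c) (C : ℝ) :
    LowerSemicontinuous fun p : Euc d × Euc d =>
      erealToENNReal (c p + ((C * (1 + ‖p.1‖ + ‖p.2‖) : ℝ) : EReal)) := by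
  have h1 : Continuous fun p : Euc d × Euc d => ((C * (1 + ‖p.1‖ + ‖p.2‖) : ℝ) : EReal) :=
    continuous_coe_real_ereal.comp (by fun_prop)
  have h2 : LowerSemicontinuous fun p : Euc d × Euc d =>
      (c p + ((C * (1 + ‖p.1‖ + ‖p.2‖) : ℝ) : EReal)) :=
    hc.add' h1.lowerSemicontinuous fun p =>
      EReal.continuousAt_add (Or.inr (EReal.coe_ne_bot _)) (Or.inr (EReal.coe_ne_top _))
  exact EReal.continuous_toENNReal.comp_lowerSemicontinuous h2
    (fun x y h => EReal.toENNReal_le_toENNReal h)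

lemma moment_eq (P Q : Measure (Euc d)) [IsProbabilityMeasure P]
    [IsProbabilityMeasure Q] (hP : FiniteFirstMoment P) (hQ : FiniteFirstMoment Q) (C : ℝ)
    (γ : Measure (Euc d × Euc d)) (hc : IsCoupling γ P Q) :
    ∫ p, C * (1 + ‖p.1‖ + ‖p.2‖) ∂γ = C * (∫ x, (1 + ‖x‖) ∂P + ∫ y, ‖y‖ ∂Q) := by
  obtain ⟨hc1, hc2⟩ := hc
  have i1 : Integrable (fun x : Euc d => 1 + ‖x‖) P := (integrable_const (1 : ℝ)).add hP.norm
  have j1 : Integrable (fun z : Euc d × Euc d => 1 + ‖z.1‖) γ := by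
    have h : Integrable (fun x : Euc d => 1 + ‖x‖) (γ.map Prod.fst) := by rw [hc1]; exact i1
    exact h.comp_measurable measurable_fst
  have j2 : Integrable (fun z : Euc d × Euc d => ‖z.2‖) γ := by
    have h : Integrable (fun x : Euc d => ‖x‖) (γ.map Prod.snd) := by rw [hc2]; exact hQ.norm
    exact h.comp_measurable measurable_snd
  have e1 : ∫ x, (1 + ‖x‖) ∂P = ∫ z, (1 + ‖z.1‖) ∂γ := by
    rw [← hc1, integral_map measurable_fst.aemeasurable (by fun_prop)]
  have e2 : ∫ x, ‖x‖ ∂Q = ∫ z, ‖z.2‖ ∂γ := by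
    rw [← hc2, integral_map measurable_snd.aemeasurable (by fun_prop)]
  rw [integral_const_mul, integral_add j1 j2, e1, e2]

end Final

/-- Measurable selection of optimal martingale transport plans: for convex-ordered
kernels P, Q with finite first moments and a lower semicontinuous cost bounded
below by −C(1+‖x‖+‖y‖), there is a kernel of optimal martingale couplings. -/
theorem measurable_optimal_martingale_transport
    (d : ℕ) (hd : 1 ≤ d) {S : Type} [MeasurableSpace S]
    (P Q : Kernel S (Euc d)) [IsMarkovKernel P] [IsMarkovKernel Q]
    (hP : ∀ θ, FiniteFirstMoment (P θ)) (hQ : ∀ θ, FiniteFirstMoment (Q θ))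
    (hcx : ∀ θ, ConvexOrder (P θ) (Q θ))
    (c : Euc d × Euc d → EReal) (hc : LowerSemicontinuous c)
    (C : ℝ) (hbound : ∀ p : Euc d × Euc d, ((-(C * (1 + ‖p.1‖ + ‖p.2‖)) : ℝ) : EReal) ≤ c p) :
    ∃ γ : Kernel S (Euc d × Euc d), IsMarkovKernel γ ∧
      ∀ θ, (IsCoupling (γ θ) (P θ) (Q θ) ∧ IsMartingaleCoupling (γ θ)) ∧
        ∀ μ' : Measure (Euc d × Euc d), IsProbabilityMeasure μ' →
          IsCoupling μ' (P θ) (Q θ) → IsMartingaleCoupling μ' →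
          ECost c C (γ θ) ≤ ECost c C μ' := by
  obtain ⟨γ, h1, h2⟩ := exists_opt_kernel P Q hP hQ hcx _ (cost_lsc c hc C)
  refine ⟨γ, h1, fun θ => ⟨(h2 θ).1, fun μ1 hμ hcp hmt => ?_⟩⟩
  unfold ECost
  rw [moment_eq _ _ (hP θ) (hQ θ) C _ (h2 θ).1.1, moment_eq _ _ (hP θ) (hQ θ) C _ hcp]
  exact EReal.sub_le_sub (EReal.coe_ennreal_le_coe_ennreal_iff.2 ((h2 θ).2 μ1 hμ hcp hmt)) le_rfl
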